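/- In the setting of the constructed dictionary D ∈ R^{d×N} (columns d_i = (e_i; 0) for i ≤ m and d_i = (√μ̃·ē; √(1−μ̃)·r_i) for i > m, with 0 < μ < 1/(m−1), ⟨e_i,e_j⟩ = 1 if i=j and −μ otherwise, ē the normalized sum of the e_i, μ̃ = μ²m/(1−(m−1)μ), r_i unit vectors in R^{d−m}), with x = ν·Σ_{j=1}^m ê_j for ν > 0, σ > 0, w = (w_m; w_{d̃}) ∈ R^d, Ω = {1,…,m}, and y = Dx + σw, one has max_{i∉Ω} |⟨d_i, y⟩| ≥ νmμ − σ√μ̃·|⟨ē, w_m⟩| + σ√(1−μ̃)·max_{i∉Ω} ⟨r_i, w_{d̃}⟩. -/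

import Mathlib

/-!
The weight `μ̃` makes every atom off the support have inner product exactly `μ` with each of the
`m` support atoms: since `⟨∑ e_i, e_j⟩ = 1 - (m-1)μ` and `‖∑ e_i‖² = m(1 - (m-1)μ)`, one gets
`√μ̃ ⟨ē, e_j⟩ = μ`. Hence `⟨d_i, Dx⟩ = νmμ` for all `i ∉ Ω`, and expanding the noise term
gives an exact formula for `⟨d_i, y⟩`, which is evaluated at the index maximizing `⟨r_i, w_{d̃}⟩`.
-/

open Real

noncomputable section

/-- Euclidean dot product on `ℝ^n`. -/
def dot {n : ℕ} (u v : Fin n → ℝ) : ℝ := ∑ i, u i * v i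

/-- Dot product on `ℝ^m × ℝ^k`, decomposing coordinatewise. -/
def pdot {m k : ℕ} (u v : (Fin m → ℝ) × (Fin k → ℝ)) : ℝ :=
  dot u.1 v.1 + dot u.2 v.2

/-- The normalized sum `ē = (∑ e_i) / ‖∑ e_i‖`. -/
def ebar {m : ℕ} (e : Fin m → Fin m → ℝ) : Fin m → ℝ :=
  (Real.sqrt (dot (∑ i, e i) (∑ i, e i)))⁻¹ • ∑ i, e i

/-- The columns of the dictionary constructed in the proof of the near-tightness
theorem: `d_i = (e_i; 0)` for `i < m` and `d_i = (√μ̃ ē; √(1-μ̃) r_i)` for `i ≥ m`,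
where `μ̃ = μ²m/(1-(m-1)μ)`. -/
def Dcol (m d N : ℕ) (μ : ℝ) (e : Fin m → Fin m → ℝ)
    (r : Fin N → Fin (d - m) → ℝ) (i : Fin N) : (Fin m → ℝ) × (Fin (d - m) → ℝ) :=
  if h : (i : ℕ) < m then (e ⟨i, h⟩, 0)
  else (Real.sqrt (μ ^ 2 * m / (1 - ((m : ℝ) - 1) * μ)) • ebar e,
        Real.sqrt (1 - μ ^ 2 * m / (1 - ((m : ℝ) - 1) * μ)) • r i)

section Gram

variable {ι n R : Type*} [Fintype ι] [DecidableEq ι] [Fintype n] [CommRing R]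
  {e : ι → n → R} {μ : R}

theorem sum_dotProduct_of_gram (he : ∀ i j, e i ⬝ᵥ e j = if i = j then 1 else -μ) (j : ι) :
    (∑ i, e i) ⬝ᵥ e j = 1 - ((Fintype.card ι : R) - 1) * μ := by
  have gram_split (i : ι) : e i ⬝ᵥ e j = (if i = j then 1 + μ else 0) - μ := by
    rw [he]
    split_ifs <;> ring
  simp only [sum_dotProduct, gram_split, Finset.sum_sub_distrib, Finset.sum_ite_eq',
    Finset.mem_univ, if_true, Finset.sum_const, Finset.card_univ, nsmul_eq_mul]
  ring

theorem sum_dotProduct_sum_of_gram (he : ∀ i j, e i ⬝ᵥ e j = if i = j then 1 else -μ) :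
    (∑ i, e i) ⬝ᵥ (∑ j, e j) = Fintype.card ι * (1 - ((Fintype.card ι : R) - 1) * μ) := by
  simp only [dotProduct_sum, sum_dotProduct_of_gram he, Finset.sum_const, Finset.card_univ,
    nsmul_eq_mul]

end Gram

section DotProducts

variable {m k : ℕ}

theorem dot_eq_dotProduct (u v : Fin m → ℝ) : dot u v = u ⬝ᵥ v := rfl

theorem pdot_add_right (u v v' : (Fin m → ℝ) × (Fin k → ℝ)) :
    pdot u (v + v') = pdot u v + pdot u v' := by
  simp only [pdot, dot_eq_dotProduct, Prod.fst_add, Prod.snd_add, dotProduct_add]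
  ring

theorem pdot_smul_right (a : ℝ) (u v : (Fin m → ℝ) × (Fin k → ℝ)) :
    pdot u (a • v) = a * pdot u v := by
  simp only [pdot, dot_eq_dotProduct, Prod.smul_fst, Prod.smul_snd, dotProduct_smul, smul_eq_mul,
    mul_add]

theorem pdot_sum_right {ι : Type*} (s : Finset ι) (u : (Fin m → ℝ) × (Fin k → ℝ))
    (v : ι → (Fin m → ℝ) × (Fin k → ℝ)) : pdot u (∑ j ∈ s, v j) = ∑ j ∈ s, pdot u (v j) :=
  map_sum (AddMonoidHom.mk' (pdot u) (pdot_add_right u)) v s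

theorem pdot_smul_smul_left (a b : ℝ) (p : Fin m → ℝ) (q : Fin k → ℝ)
    (v : (Fin m → ℝ) × (Fin k → ℝ)) :
    pdot (a • p, b • q) v = a * dot p v.1 + b * dot q v.2 := by
  simp only [pdot, dot_eq_dotProduct, smul_dotProduct, smul_eq_mul]

end DotProducts

/-- The squared weight `μ̃ = μ²m/(1-(m-1)μ)` of `ē` in the atoms `d_i`, `i ≥ m`, of `Dcol`. -/
def muTilde (m : ℕ) (μ : ℝ) : ℝ := μ ^ 2 * m / (1 - ((m : ℝ) - 1) * μ)

section Dictionary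

variable {m d N : ℕ} {μ : ℝ} {e : Fin m → Fin m → ℝ}

theorem dot_ebar_of_gram (he : ∀ i j, dot (e i) (e j) = if i = j then 1 else -μ) (j : Fin m) :
    dot (ebar e) (e j) =
      (1 - ((m : ℝ) - 1) * μ) / √(m * (1 - ((m : ℝ) - 1) * μ)) := by
  have norm_sq : dot (∑ i, e i) (∑ i, e i) = m * (1 - ((m : ℝ) - 1) * μ) := by
    simpa only [Fintype.card_fin, dot_eq_dotProduct] using sum_dotProduct_sum_of_gram he
  have sum_dot : (∑ i, e i) ⬝ᵥ e j = 1 - ((m : ℝ) - 1) * μ := by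
    simpa only [Fintype.card_fin] using sum_dotProduct_of_gram he j
  rw [dot_eq_dotProduct, ebar, smul_dotProduct, norm_sq, sum_dot, smul_eq_mul, inv_mul_eq_div]

theorem sqrt_muTilde_mul_dot_ebar (hμ : 0 ≤ μ) (hμ' : ((m : ℝ) - 1) * μ < 1)
    (he : ∀ i j, dot (e i) (e j) = if i = j then 1 else -μ) (j : Fin m) :
    √(muTilde m μ) * dot (ebar e) (e j) = μ := by
  rw [dot_ebar_of_gram he, muTilde]
  have hm : (0 : ℝ) < m := Nat.cast_pos.2 j.pos
  have hc : 0 < 1 - ((m : ℝ) - 1) * μ := sub_pos.2 hμ'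
  generalize 1 - ((m : ℝ) - 1) * μ = c at hc
  calc √(μ ^ 2 * m / c) * (c / √(m * c))
      = √(μ ^ 2 * m / c) / √(m * c) * c := by ring
    _ = √((μ / c) ^ 2) * c := by
        rw [← Real.sqrt_div' _ (by positivity)]
        congr 2
        field_simp
    _ = μ := by rw [Real.sqrt_sq (by positivity), div_mul_cancel₀ _ hc.ne']

variable {r : Fin N → Fin (d - m) → ℝ} {i j : Fin N}

theorem Dcol_of_lt (hj : (j : ℕ) < m) : Dcol m d N μ e r j = (e ⟨j, hj⟩, 0) :=
  dif_pos hj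

theorem Dcol_of_le (hi : m ≤ (i : ℕ)) :
    Dcol m d N μ e r i = (√(muTilde m μ) • ebar e, √(1 - muTilde m μ) • r i) :=
  dif_neg hi.not_gt

theorem pdot_Dcol_Dcol (hμ : 0 ≤ μ) (hμ' : ((m : ℝ) - 1) * μ < 1)
    (he : ∀ i j, dot (e i) (e j) = if i = j then 1 else -μ)
    (hi : m ≤ (i : ℕ)) (hj : (j : ℕ) < m) :
    pdot (Dcol m d N μ e r i) (Dcol m d N μ e r j) = μ := by
  rw [Dcol_of_le hi, Dcol_of_lt hj, pdot_smul_smul_left, sqrt_muTilde_mul_dot_ebar hμ hμ' he,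
    dot_eq_dotProduct, dotProduct_zero, mul_zero, add_zero]

theorem pdot_Dcol_sum_support (hμ : 0 ≤ μ) (hμ' : ((m : ℝ) - 1) * μ < 1)
    (he : ∀ i j, dot (e i) (e j) = if i = j then 1 else -μ) (hi : m ≤ (i : ℕ)) (ν : ℝ) :
    pdot (Dcol m d N μ e r i)
      (∑ j : Fin N, (if (j : ℕ) < m then ν else 0) • Dcol m d N μ e r j) = ν * m * μ := by
  have support_term (j : Fin N) :
      pdot (Dcol m d N μ e r i) ((if (j : ℕ) < m then ν else 0) • Dcol m d N μ e r j) =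
        if (j : ℕ) < m then ν * μ else 0 := by
    rw [pdot_smul_right]
    split_ifs with hj
    · rw [pdot_Dcol_Dcol hμ hμ' he hi hj]
    · exact zero_mul _
  have card_support : (Finset.univ.filter fun j : Fin N => (j : ℕ) < m).card = m := by
    rw [Fin.card_filter_val_lt, min_eq_right (hi.trans i.isLt.le)]
  rw [pdot_sum_right, Finset.sum_congr rfl fun j _ => support_term j, ← Finset.sum_filter,
    Finset.sum_const, card_support, nsmul_eq_mul]
  ring

theorem pdot_Dcol_noisy_signal (hμ : 0 ≤ μ) (hμ' : ((m : ℝ) - 1) * μ < 1)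
    (he : ∀ i j, dot (e i) (e j) = if i = j then 1 else -μ) (hi : m ≤ (i : ℕ)) (ν σ : ℝ)
    (w : (Fin m → ℝ) × (Fin (d - m) → ℝ)) :
    pdot (Dcol m d N μ e r i)
        ((∑ j : Fin N, (if (j : ℕ) < m then ν else 0) • Dcol m d N μ e r j) + σ • w) =
      ν * m * μ + σ * √(muTilde m μ) * dot (ebar e) w.1 +
        σ * √(1 - muTilde m μ) * dot (r i) w.2 := by
  rw [pdot_add_right, pdot_smul_right, pdot_Dcol_sum_support hμ hμ' he hi, Dcol_of_le hi,
    pdot_smul_smul_left]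
  ring

end Dictionary

theorem nonsupport_max_lower_bound_general
    {m d N : ℕ} (hmN : m < N) {μ : ℝ} (hμ : 0 ≤ μ) (hμ' : ((m : ℝ) - 1) * μ < 1)
    {e : Fin m → Fin m → ℝ} (he : ∀ i j, dot (e i) (e j) = if i = j then 1 else -μ)
    (r : Fin N → Fin (d - m) → ℝ) (ν : ℝ) {σ : ℝ} (hσ : 0 ≤ σ)
    (w : (Fin m → ℝ) × (Fin (d - m) → ℝ)) :
    ν * m * μ - σ * √(muTilde m μ) * |dot (ebar e) w.1| +
        σ * √(1 - muTilde m μ) *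
          ((Finset.univ.filter fun i : Fin N => m ≤ (i : ℕ)).sup'
            ⟨⟨m, hmN⟩, by simp⟩ fun i => dot (r i) w.2) ≤
      (Finset.univ.filter fun i : Fin N => m ≤ (i : ℕ)).sup'
        ⟨⟨m, hmN⟩, by simp⟩ fun i =>
          |pdot (Dcol m d N μ e r i)
            ((∑ j : Fin N, (if (j : ℕ) < m then ν else 0) • Dcol m d N μ e r j) + σ • w)| := by
  obtain ⟨i, hi, max_eq⟩ := Finset.exists_mem_eq_sup'
    (s := Finset.univ.filter fun i : Fin N => m ≤ (i : ℕ)) ⟨⟨m, hmN⟩, by simp⟩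
    fun i => dot (r i) w.2
  have hmi : m ≤ (i : ℕ) := (Finset.mem_filter.1 hi).2
  have noise_le : -(σ * √(muTilde m μ) * |dot (ebar e) w.1|) ≤
      σ * √(muTilde m μ) * dot (ebar e) w.1 := by
    rw [← mul_neg]
    gcongr
    exact neg_abs_le _
  rw [max_eq]
  refine le_trans ?_ (Finset.le_sup' _ hi)
  refine le_trans ?_ (le_abs_self _)
  rw [pdot_Dcol_noisy_signal hμ hμ' he hmi]
  linarith

/-- Lemma (lower bound for the maximal correlation with non-support atoms): for the
constructed dictionary, `x = ν Σ_{j<m} ê_j`, `w = (w_m; w_{d̃})` and `y = Dx + σw`,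
`max_{i∉Ω} |⟨d_i, y⟩| ≥ νmμ - σ√μ̃ |⟨ē, w_m⟩| + σ√(1-μ̃) max_{i∉Ω} ⟨r_i, w_{d̃}⟩`. -/
theorem nonsupport_max_lower_bound
    (m d N : ℕ) (hm : 2 ≤ m) (hmd : m < d) (hdN : d < N)
    (μ : ℝ) (hμ0 : 0 < μ) (hμ1 : μ < 1 / ((m : ℝ) - 1))
    (e : Fin m → Fin m → ℝ)
    (he : ∀ i j : Fin m, dot (e i) (e j) = if i = j then (1 : ℝ) else -μ)
    (r : Fin N → Fin (d - m) → ℝ)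
    (hr_unit : ∀ i : Fin N, m ≤ (i : ℕ) → dot (r i) (r i) = 1)
    (ν σ : ℝ) (hν : 0 < ν) (hσ : 0 < σ)
    (w : (Fin m → ℝ) × (Fin (d - m) → ℝ)) :
    ν * m * μ -
        σ * Real.sqrt (μ ^ 2 * m / (1 - ((m : ℝ) - 1) * μ)) * |dot (ebar e) w.1| +
        σ * Real.sqrt (1 - μ ^ 2 * m / (1 - ((m : ℝ) - 1) * μ)) *
          ((Finset.univ.filter fun i : Fin N => m ≤ (i : ℕ)).sup'
            ⟨⟨m, by omega⟩, by simp⟩ fun i => dot (r i) w.2) ≤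
      (Finset.univ.filter fun i : Fin N => m ≤ (i : ℕ)).sup'
        ⟨⟨m, by omega⟩, by simp⟩ fun i =>
          |pdot (Dcol m d N μ e r i)
            ((∑ j : Fin N, (if (j : ℕ) < m then ν else 0) • Dcol m d N μ e r j) + σ • w)| := by
  have hm1 : (0 : ℝ) < (m : ℝ) - 1 := sub_pos.2 (by exact_mod_cast hm)
  exact nonsupport_max_lower_bound_general (hmd.trans hdN) hμ0.le ((lt_div_iff₀' hm1).1 hμ1) he
    r ν hσ.le w

end
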